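/- Let B be a division k-algebra and let n ≥ 1. Then htr(M_n(B)) = htr(B): the injective dimension of M_n(B) ⊗_k M_n(B)^op as a left module over itself equals the injective dimension of B ⊗_k B^op as a left module over itself. (Consequently htr is invariant under Morita equivalence of simple artinian k-algebras.) -/

import Mathlib

open CategoryTheory Limits TensorProduct

universe u

/-- The injective dimension of a module `M`, defined as the least `n : ℕ∞` for which
there is an injective resolution of `M` that vanishes in all cohomological degrees `> n`. -/
noncomputable def ModuleCat.injDim {R : Type u} [Ring R] (M : ModuleCat.{u} R) : ℕ∞ :=
  sInf {n : ℕ∞ | ∃ I : InjectiveResolution M, ∀ i : ℕ, n < (i : ℕ∞) → IsZero (I.cocomplex.X i)}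

/-- The projective dimension of a module `M`, defined as the least `n : ℕ∞` for which
there is a projective resolution of `M` that vanishes in all homological degrees `> n`. -/
noncomputable def ModuleCat.projDim {R : Type u} [Ring R] (M : ModuleCat.{u} R) : ℕ∞ :=
  sInf {n : ℕ∞ | ∃ P : ProjectiveResolution M, ∀ i : ℕ, n < (i : ℕ∞) → IsZero (P.complex.X i)}

/-- The injective dimension of a ring as a left module over itself. -/
noncomputable def Ring.selfInjDim (R : Type u) [Ring R] : ℕ∞ :=
  ModuleCat.injDim (ModuleCat.of R R)

/-- The left global dimension of a ring: the supremum of the projective dimensions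
of all left `R`-modules. -/
noncomputable def Ring.globalDim (R : Type u) [Ring R] : ℕ∞ :=
  ⨆ M : ModuleCat.{u} R, M.projDim

/-!
The enveloping algebra of `Mₙ(B)` is a matrix ring of size `n²` over the enveloping algebra of `B`,
so it is enough to show that passing from a ring `R` to a matrix ring over it does not change the
self-injective dimension. The Morita equivalence `M ↦ M^ι` preserves injective dimensions and sends
the free module `R^ι`, whose injective dimension is that of `R`, to the regular module of the
matrix ring.

Injective dimensions of objects in different categories are compared through the vanishing of
`Ext`. This agrees with the definition by resolutions: splicing injective presentations, a module
has an injective resolution that is zero above degree `m` as soon as its `Ext` vanishes there.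
-/

section Resolutions

variable {C : Type*} [Category* C] [Abelian C]

lemma exact_comp_mono {X Y Z W : C} {f : X ⟶ Y} {g : Y ⟶ Z} {w : f ≫ g = 0}
    (h : (ShortComplex.mk f g w).Exact) (i : Z ⟶ W) [Mono i] :
    (ShortComplex.mk f (g ≫ i) (by rw [reassoc_of% w, zero_comp])).Exact :=
  let φ : ShortComplex.mk f g w ⟶ ShortComplex.mk f (g ≫ i) _ :=
    { τ₁ := 𝟙 X, τ₂ := 𝟙 Y, τ₃ := i }
  have : Epi φ.τ₁ := inferInstanceAs (Epi (𝟙 X))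
  have : IsIso φ.τ₂ := inferInstanceAs (IsIso (𝟙 Y))
  have : Mono φ.τ₃ := ‹Mono i›
  (ShortComplex.exact_iff_of_epi_of_isIso_of_mono φ).1 h

lemma exact_epi_comp {X Y Z W : C} {f : X ⟶ Y} {g : Y ⟶ Z} {w : f ≫ g = 0}
    (h : (ShortComplex.mk f g w).Exact) (p : W ⟶ X) [Epi p] :
    (ShortComplex.mk (p ≫ f) g (by rw [Category.assoc, w, comp_zero])).Exact :=
  let φ : ShortComplex.mk (p ≫ f) g _ ⟶ ShortComplex.mk f g w :=
    { τ₁ := p, τ₂ := 𝟙 Y, τ₃ := 𝟙 Z }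
  have : Epi φ.τ₁ := ‹Epi p›
  have : IsIso φ.τ₂ := inferInstanceAs (IsIso (𝟙 Y))
  have : Mono φ.τ₃ := inferInstanceAs (Mono (𝟙 Z))
  (ShortComplex.exact_iff_of_epi_of_isIso_of_mono φ).2 h

lemma quasiIso_fromSingle₀Equiv_symm {X : C} {K : CochainComplex C ℕ} (f : X ⟶ K.X 0) [Mono f]
    (w : f ≫ K.d 0 1 = 0) (h₀ : (ShortComplex.mk f (K.d 0 1) w).Exact)
    (hK : ∀ n, K.ExactAt (n + 1)) :
    QuasiIso ((CochainComplex.fromSingle₀Equiv K X).symm ⟨f, w⟩) where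
  quasiIsoAt n := by
    cases n with
    | zero =>
      rw [CochainComplex.quasiIsoAt₀_iff,
        ShortComplex.quasiIso_iff_of_zeros _ rfl rfl (K.shape 0 0 (by simp))]
      refine (ShortComplex.exact_and_mono_f_iff_of_iso ?_).2 ⟨h₀, ‹Mono f›⟩
      exact ShortComplex.isoMk (Iso.refl _) (Iso.refl _) (Iso.refl _)
        ((Category.id_comp _).trans
          ((CochainComplex.fromSingle₀Equiv_symm_apply_f_zero f w).symm.trans
            (Category.comp_id _).symm))
        ((Category.id_comp _).trans (Category.comp_id _).symm)
    | succ n =>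
      rw [quasiIsoAt_iff_exactAt _ _ (CochainComplex.exactAt_succ_single_obj _ _)]
      exact hK n

/-- The injective resolution `0 ⟶ X₁ ⟶ X₂ ⟶ J⁰ ⟶ J¹ ⟶ ⋯` spliced from a short exact sequence
`0 ⟶ X₁ ⟶ X₂ ⟶ X₃ ⟶ 0` with `X₂` injective and an injective resolution `J` of `X₃`. -/
noncomputable def spliceInjectiveResolution {S : ShortComplex C} (hS : S.ShortExact)
    [Injective S.X₂] (J : InjectiveResolution S.X₃) : InjectiveResolution S.X₁ :=
  let j : S.X₃ ⟶ J.cocomplex.X 0 := J.ι.f 0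
  have hj : j ≫ J.cocomplex.d 0 1 = 0 := J.ι_f_zero_comp_complex_d
  have hgj : (S.g ≫ j) ≫ J.cocomplex.d 0 1 = 0 := by rw [Category.assoc, hj, comp_zero]
  let K := J.cocomplex.augment (S.g ≫ j) hgj
  let f : S.X₁ ⟶ K.X 0 := S.f
  have hf : f ≫ K.d 0 1 = 0 := (S.zero_assoc j).trans zero_comp
  { cocomplex := K
    injective
      | 0 => ‹Injective S.X₂›
      | n + 1 => J.injective n
    ι := (CochainComplex.fromSingle₀Equiv K S.X₁).symm ⟨f, hf⟩
    quasiIso := by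
      have : Mono f := hS.mono_f
      have : Epi S.g := hS.epi_g
      have : Mono j := inferInstanceAs (Mono (J.ι.f 0))
      have exact_j : (ShortComplex.mk j (J.cocomplex.d 0 1) hj).Exact := J.exact₀
      refine quasiIso_fromSingle₀Equiv_symm f hf (exact_comp_mono hS.exact j) fun n ↦ ?_
      rw [HomologicalComplex.exactAt_iff' _ n (n + 1) (n + 1 + 1) (by simp) (by simp)]
      cases n with
      | zero => exact exact_epi_comp exact_j S.g
      | succ n => exact J.exact_succ n }

lemma hasInjectiveDimensionLE_of_injectiveResolution {X : C} (I : InjectiveResolution X) {m : ℕ}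
    (hI : ∀ i, m < i → IsZero (I.cocomplex.X i)) : HasInjectiveDimensionLE X m := by
  let := HasExt.standard C
  refine HasInjectiveDimensionLT.mk fun i hi Y e ↦ ?_
  obtain ⟨f, _, rfl⟩ := I.extMk_surjective e (i + 1) rfl
  obtain rfl : f = 0 := (hI i hi).eq_of_tgt _ _
  simp

lemma exists_injectiveResolution_of_hasInjectiveDimensionLE [EnoughInjectives C] {m : ℕ} {X : C}
    (hX : HasInjectiveDimensionLE X m) :
    ∃ I : InjectiveResolution X, ∀ i, m < i → IsZero (I.cocomplex.X i) := by
  induction m generalizing X with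
  | zero =>
    have : Injective X := injective_iff_hasInjectiveDimensionLT_one.2 hX
    exact ⟨.self X, fun i hi ↦ HomologicalComplex.isZero_single_obj_X _ _ _ _ hi.ne'⟩
  | succ m ih =>
    obtain ⟨ip⟩ := EnoughInjectives.presentation X
    have : Injective ip.shortComplex.X₂ := ip.injective
    have hS := ip.shortExact_shortComplex
    obtain ⟨J, hJ⟩ := ih ((hS.hasInjectiveDimensionLT_X₃_iff m ip.injective).2 hX)
    refine ⟨spliceInjectiveResolution hS J, fun i hi ↦ ?_⟩
    obtain ⟨i, rfl⟩ := Nat.exists_eq_succ_of_ne_zero (Nat.ne_zero_of_lt hi)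
    exact hJ i (Nat.lt_of_succ_lt_succ hi)

end Resolutions

section InjectiveDimension

variable {C : Type*} [Category* C] [Abelian C] {D : Type*} [Category* D] [Abelian D]

lemma injectiveDimension_le_of_forall_hasInjectiveDimensionLT {X : C} {Y : D}
    (h : ∀ n, HasInjectiveDimensionLT X n → HasInjectiveDimensionLT Y n) :
    injectiveDimension Y ≤ injectiveDimension X :=
  sInf_le_sInf fun _ hd i hi ↦ h i (hd i hi)

lemma hasInjectiveDimensionLT_obj [EnoughInjectives C] (F : C ⥤ D) [F.PreservesZeroMorphisms]
    [PreservesFiniteLimits F] [PreservesFiniteColimits F] [F.PreservesInjectiveObjects]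
    {X : C} {n : ℕ} (hX : HasInjectiveDimensionLT X n) : HasInjectiveDimensionLT (F.obj X) n := by
  induction n generalizing X with
  | zero =>
    rw [hasInjectiveDimensionLT_zero_iff_isZero] at hX ⊢
    exact F.map_isZero hX
  | succ n ih =>
    cases n with
    | zero =>
      rw [← injective_iff_hasInjectiveDimensionLT_one] at hX ⊢
      exact F.injective_obj X
    | succ n =>
      obtain ⟨ip⟩ := EnoughInjectives.presentation X
      have hS := ip.shortExact_shortComplex
      have hF : Injective (F.obj ip.J) := F.injective_obj_of_injective ip.injective
      exact ((hS.map_of_exact F).hasInjectiveDimensionLT_X₃_iff n hF).1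
        (ih ((hS.hasInjectiveDimensionLT_X₃_iff n ip.injective).2 hX))

lemma injectiveDimension_obj_le [EnoughInjectives C] (F : C ⥤ D) [F.PreservesZeroMorphisms]
    [PreservesFiniteLimits F] [PreservesFiniteColimits F] [F.PreservesInjectiveObjects] (X : C) :
    injectiveDimension (F.obj X) ≤ injectiveDimension X :=
  injectiveDimension_le_of_forall_hasInjectiveDimensionLT fun _ ↦ hasInjectiveDimensionLT_obj F

lemma injectiveDimension_equivalence_obj [EnoughInjectives C] (E : C ≌ D) (X : C) :
    injectiveDimension (E.functor.obj X) = injectiveDimension X := by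
  have : EnoughInjectives D := E.enoughInjectives_iff.1 ‹_›
  refine (injectiveDimension_obj_le E.functor X).antisymm ?_
  calc injectiveDimension X
      = injectiveDimension (E.inverse.obj (E.functor.obj X)) :=
        injectiveDimension_eq_of_iso (E.unitIso.app X)
    _ ≤ injectiveDimension (E.functor.obj X) := injectiveDimension_obj_le E.inverse _

lemma hasInjectiveDimensionLT_biproduct {ι : Type*} [Finite ι] {X : ι → C} [HasBiproduct X]
    {n : ℕ} (hX : ∀ i, HasInjectiveDimensionLT (X i) n) : HasInjectiveDimensionLT (⨁ X) n := by
  let := HasExt.standard C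
  have := Fintype.ofFinite ι
  refine HasInjectiveDimensionLT.mk fun d hd Y e ↦
    (Abelian.Ext.addEquivBiproduct Y (biproduct.isBilimit X) d).injective <| funext fun i ↦ ?_
  exact (Abelian.Ext.eq_zero_of_hasInjectiveDimensionLT _ n hd).trans
    (Abelian.Ext.eq_zero_of_hasInjectiveDimensionLT _ n hd).symm

lemma injectiveDimension_biproduct {ι : Type*} [Finite ι] (X : ι → C) [HasBiproduct X] :
    injectiveDimension (⨁ X) = ⨆ i, injectiveDimension (X i) := by
  refine le_antisymm (sInf_le fun n hn ↦ hasInjectiveDimensionLT_biproduct fun i ↦ ?_)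
    (iSup_le fun i ↦ ?_)
  · exact injectiveDimension_lt_iff.1 ((le_iSup (fun i ↦ injectiveDimension (X i)) i).trans_lt hn)
  · exact Retract.injectiveDimension_le
      { i := biproduct.ι X i, r := biproduct.π X i }

end InjectiveDimension

section Modules

lemma injDim_le_natCast_iff {R : Type u} [Ring R] {M : ModuleCat.{u} R} {m : ℕ} :
    M.injDim ≤ m ↔ HasInjectiveDimensionLE M m := by
  constructor
  · intro hm
    obtain ⟨I, hI⟩ : ∃ I : InjectiveResolution M,
        ∀ i : ℕ, M.injDim < i → IsZero (I.cocomplex.X i) :=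
      csInf_mem (s := {n : ℕ∞ | ∃ I : InjectiveResolution M, ∀ i : ℕ, n < i → _})
        ⟨⊤, .of M, fun _ hi ↦ (not_top_lt hi).elim⟩
    exact hasInjectiveDimensionLE_of_injectiveResolution I
      fun i hi ↦ hI i (hm.trans_lt (by exact_mod_cast hi))
  · intro hM
    obtain ⟨I, hI⟩ := exists_injectiveResolution_of_hasInjectiveDimensionLE hM
    exact sInf_le ⟨I, fun i hi ↦ hI i (by exact_mod_cast hi)⟩

/- `injectiveDimension` takes the value `⊥` on zero modules, where `ModuleCat.injDim` is `0`. -/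
lemma injDim_eq_unbotD_injectiveDimension {R : Type u} [Ring R] (M : ModuleCat.{u} R) :
    M.injDim = (injectiveDimension M).unbotD 0 := by
  refine eq_of_forall_ge_iff fun d ↦ ?_
  rw [WithBot.unbotD_le_iff fun _ ↦ zero_le]
  induction d with
  | top => simp
  | coe m => exact injDim_le_natCast_iff.trans (injectiveDimension_le_iff M m).symm

lemma injectiveDimension_pi {R : Type u} [Ring R] {ι : Type} [Finite ι] (M : ι → ModuleCat.{u} R) :
    injectiveDimension (ModuleCat.of R (∀ i, M i)) = ⨆ i, injectiveDimension (M i) := by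
  rw [← injectiveDimension_eq_of_iso (ModuleCat.biproductIsoPi M), injectiveDimension_biproduct]

lemma selfInjDim_congr {R S : Type u} [Ring R] [Ring S] (e : R ≃+* S) :
    Ring.selfInjDim R = Ring.selfInjDim S := by
  have := RingHomInvPair.of_ringEquiv e
  have := RingHomInvPair.of_ringEquiv e.symm
  let eSemilinear : R ≃ₛₗ[RingHomClass.toRingHom e] S :=
    { e with map_smul' := map_mul e }
  rw [Ring.selfInjDim, Ring.selfInjDim, injDim_eq_unbotD_injectiveDimension,
    injDim_eq_unbotD_injectiveDimension, ModuleCat.injectiveDimension_eq_of_semiLinearEquiv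
      (M := .of R R) (N := .of S S) e eSemilinear]

variable {ι : Type} [Fintype ι] [DecidableEq ι]

/-- The Morita equivalence `M ↦ M^ι` between modules over `R` and over `Matrix ι ι R` sends the
free module `R^ι` to the regular module: a matrix is the family of its rows. -/
def toMatrixModCatObjPiIso (R : Type u) [Ring R] :
    (ModuleCat.toMatrixModCat R ι).obj (.of R (ι → R)) ≅
      .of (Matrix ι ι R) (Matrix ι ι R) :=
  let e : (ModuleCat.toMatrixModCat R ι).obj (.of R (ι → R)) ≃ₗ[Matrix ι ι R]
      ModuleCat.of (Matrix ι ι R) (Matrix ι ι R) :=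
    { toFun v := Matrix.of v
      invFun A := A
      left_inv _ := rfl
      right_inv _ := rfl
      map_add' _ _ := rfl
      map_smul' _ _ := Matrix.ext fun _ b ↦ Finset.sum_apply b _ _ }
  e.toModuleIso

lemma selfInjDim_matrix (R : Type u) [Ring R] [Nonempty ι] :
    Ring.selfInjDim (Matrix ι ι R) = Ring.selfInjDim R := by
  have i : ι := Classical.arbitrary ι
  rw [Ring.selfInjDim, Ring.selfInjDim, injDim_eq_unbotD_injectiveDimension,
    injDim_eq_unbotD_injectiveDimension]
  congr 1
  calc injectiveDimension (ModuleCat.of (Matrix ι ι R) (Matrix ι ι R))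
      = injectiveDimension ((ModuleCat.matrixEquivalence R i).functor.obj (.of R (ι → R))) :=
        (injectiveDimension_eq_of_iso (toMatrixModCatObjPiIso R)).symm
    _ = injectiveDimension (ModuleCat.of R (ι → R)) := injectiveDimension_equivalence_obj _ _
    _ = ⨆ _ : ι, injectiveDimension (ModuleCat.of R R) := injectiveDimension_pi fun _ ↦ .of R R
    _ = injectiveDimension (ModuleCat.of R R) := ciSup_const

end Modules

/-- The enveloping algebra of a matrix algebra over `B` is a matrix algebra over the enveloping
algebra of `B`: transposition moves `ᵐᵒᵖ` inside the matrices, and the Kronecker product does the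
rest. -/
def envelopingMatrixAlgEquiv (k B ι : Type*) [CommRing k] [Ring B] [Algebra k B] [Fintype ι]
    [DecidableEq ι] :
    Matrix ι ι B ⊗[k] (Matrix ι ι B)ᵐᵒᵖ ≃ₐ[k] Matrix (ι × ι) (ι × ι) (B ⊗[k] Bᵐᵒᵖ) :=
  (Algebra.TensorProduct.congr .refl AlgEquiv.mopMatrix.symm).trans
    (Matrix.kroneckerTMulAlgEquiv ι ι k k B Bᵐᵒᵖ)

theorem stmt_4_general (k : Type u) [CommRing k] (B : Type u) [Ring B] [Algebra k B]
    (ι : Type) [Fintype ι] [DecidableEq ι] [Nonempty ι] :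
    Ring.selfInjDim (Matrix ι ι B ⊗[k] (Matrix ι ι B)ᵐᵒᵖ) = Ring.selfInjDim (B ⊗[k] Bᵐᵒᵖ) :=
  (selfInjDim_congr (envelopingMatrixAlgEquiv k B ι).toRingEquiv).trans (selfInjDim_matrix _)

/-!
Statement 4 (Proposition 1.5(b)): for a division `k`-algebra `B` and `n ≥ 1`,
`htr (Mₙ(B)) = htr B`, where `htr A` is the injective dimension of `A ⊗[k] Aᵐᵒᵖ` as a left
module over itself.
-/

theorem stmt_4 (k : Type u) [Field k] (B : Type u) [DivisionRing B] [Algebra k B]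
    (n : ℕ) (hn : 1 ≤ n) :
    Ring.selfInjDim (Matrix (Fin n) (Fin n) B ⊗[k] (Matrix (Fin n) (Fin n) B)ᵐᵒᵖ) =
      Ring.selfInjDim (B ⊗[k] Bᵐᵒᵖ) :=
  have : Nonempty (Fin n) := ⟨⟨0, hn⟩⟩
  stmt_4_general k B (Fin n)
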